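/- Let e, n, ξ, κ, τ, σ be a frame system of type {space, space, time} along an interval I, and let β be the striction curve with β' = sinh σ · e + cosh σ · ξ. Then for every u ∈ I the distribution parameter of the timelike non-cylindrical ruled surface φ(u,v) = β(u) + v·e(u), namely P(u) = det(β'(u), e(u), e'(u)) / g(e'(u), e'(u)), equals cosh σ(u) / κ(u). -/

import Mathlib

noncomputable section

/-- Lorentz metric on ℝ³: g(v,w) = v₁w₁ + v₂w₂ − v₃w₃. -/
def lg (v w : Fin 3 → ℝ) : ℝ := v 0 * w 0 + v 1 * w 1 - v 2 * w 2

/-- Lorentzian cross product: v ∧ w = (v₃w₂ − v₂w₃, v₁w₃ − v₃w₁, v₁w₂ − v₂w₁). -/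
def lcross (v w : Fin 3 → ℝ) : Fin 3 → ℝ :=
  ![v 2 * w 1 - v 1 * w 2, v 0 * w 2 - v 2 * w 0, v 0 * w 1 - v 1 * w 0]

/-- Determinant of the 3×3 matrix with rows a, b, c. -/
def ldet (a b c : Fin 3 → ℝ) : ℝ :=
  Matrix.det !![a 0, a 1, a 2; b 0, b 1, b 2; c 0, c 1, c 2]

/-!
Up to sign, `det(a, b, c)` is the Lorentzian triple product `g(a, b ∧ c)`. Since `e' = κ n`, the
numerator of `P` is therefore `-κ g(β', e ∧ n) = -κ g(β', ξ)`, in which only the `ξ`-component of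
`β'` survives because `e ∧ n` is orthogonal to `e`. The denominator is `κ² g(n, n)`.
-/

section LorentzAlgebra

variable (r : ℝ) (v w x : Fin 3 → ℝ)

lemma lg_comm : lg v w = lg w v := by
  simp only [lg, mul_comm]

lemma lg_add_left : lg (v + w) x = lg v x + lg w x := by
  simp only [lg, Pi.add_apply]
  ring

lemma lg_smul_left : lg (r • v) w = r * lg v w := by
  simp only [lg, Pi.smul_apply, smul_eq_mul]
  ring

lemma lg_smul_right : lg v (r • w) = r * lg v w := by
  rw [lg_comm, lg_smul_left, lg_comm]

lemma lcross_smul_right : lcross v (r • w) = r • lcross v w := by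
  ext i
  fin_cases i <;> simp [lcross] <;> ring

lemma lg_lcross_self_left : lg v (lcross v w) = 0 := by
  simp only [lg, lcross, Matrix.cons_val]
  ring

lemma ldet_eq_neg_lg_lcross : ldet v w x = -lg v (lcross w x) := by
  simp only [ldet, lg, lcross, Matrix.det_fin_three, Matrix.of_apply, Matrix.cons_val]
  ring

lemma lg_smul_add_smul_lcross (a b : ℝ) :
    lg (a • v + b • lcross v w) (lcross v w) = b * lg (lcross v w) (lcross v w) := by
  rw [lg_add_left, lg_smul_left, lg_smul_left, lg_lcross_self_left, mul_zero, zero_add]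

end LorentzAlgebra

/-- The distribution parameter `P(u) = det(β'(u), e(u), e'(u)) / g(e'(u), e'(u))` of the ruled
surface `φ(u, v) = β(u) + v e(u)`, encoded by its base curve `β` and its director curve `e`. It has
its geometric meaning only where `g(e'(u), e'(u)) ≠ 0`; elsewhere the quotient is `0`. -/
def distributionParameter (β e : ℝ → Fin 3 → ℝ) (u : ℝ) : ℝ :=
  ldet (deriv β u) (e u) (deriv e u) / lg (deriv e u) (deriv e u)

theorem stmt13_general {e β : ℝ → Fin 3 → ℝ} {n ξ : Fin 3 → ℝ} {κ a b u : ℝ}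
    (he : HasDerivAt e (κ • n) u) (hβ : HasDerivAt β (a • e u + b • ξ) u)
    (hξ : lcross (e u) n = ξ) (hκ : κ ≠ 0) (hn : lg n n ≠ 0) :
    distributionParameter β e u = -(b * lg ξ ξ) / (κ * lg n n) := by
  subst hξ
  have numerator : ldet (deriv β u) (e u) (deriv e u) =
      -(κ * (b * lg (lcross (e u) n) (lcross (e u) n))) := by
    rw [he.deriv, hβ.deriv, ldet_eq_neg_lg_lcross, lcross_smul_right, lg_smul_right,
      lg_smul_add_smul_lcross]
  have denominator : lg (deriv e u) (deriv e u) = κ * (κ * lg n n) := by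
    rw [he.deriv, lg_smul_left, lg_smul_right]
  rw [distributionParameter, numerator, denominator]
  field_simp

/-- Distribution parameter of the timelike ruled surface M₃: P = cosh σ / κ. -/
theorem stmt13
    (I : Set ℝ) (hI : IsOpen I)
    (e n ξ β : ℝ → Fin 3 → ℝ) (κ τ σ : ℝ → ℝ)
    (hde : ∀ u ∈ I, DifferentiableAt ℝ e u)
    (hdn : ∀ u ∈ I, DifferentiableAt ℝ n u)
    (hdξ : ∀ u ∈ I, DifferentiableAt ℝ ξ u)
    (hdβ : ∀ u ∈ I, DifferentiableAt ℝ β u)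
    (hκ0 : ∀ u ∈ I, κ u ≠ 0)
    (hee : ∀ u ∈ I, lg (e u) (e u) = 1)
    (hnn : ∀ u ∈ I, lg (n u) (n u) = 1)
    (hξξ : ∀ u ∈ I, lg (ξ u) (ξ u) = -1)
    (hen : ∀ u ∈ I, lg (e u) (n u) = 0)
    (hnξ : ∀ u ∈ I, lg (n u) (ξ u) = 0)
    (hξe : ∀ u ∈ I, lg (ξ u) (e u) = 0)
    (hc1 : ∀ u ∈ I, lcross (e u) (n u) = ξ u)
    (hc2 : ∀ u ∈ I, lcross (n u) (ξ u) = -e u)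
    (hc3 : ∀ u ∈ I, lcross (ξ u) (e u) = -n u)
    (hfe : ∀ u ∈ I, deriv e u = κ u • n u)
    (hfn : ∀ u ∈ I, deriv n u = (-(κ u)) • e u + τ u • ξ u)
    (hfξ : ∀ u ∈ I, deriv ξ u = τ u • n u)
    (hβ' : ∀ u ∈ I, deriv β u = Real.sinh (σ u) • e u + Real.cosh (σ u) • ξ u) :
    ∀ u ∈ I,
      ldet (deriv β u) (e u) (deriv e u) / lg (deriv e u) (deriv e u)
        = Real.cosh (σ u) / κ u := by
  intro u hu
  simpa [distributionParameter, hnn u hu, hξξ u hu] using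
    stmt13_general (hfe u hu ▸ (hde u hu).hasDerivAt) (hβ' u hu ▸ (hdβ u hu).hasDerivAt)
      (hc1 u hu) (hκ0 u hu) (by simp [hnn u hu])
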